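/- The functions H₂(M,N.S) = ⟨S,S⟩, H₃(M,N,S) = ⟨N,N⟩ and H₄(M,N,S) = ⟨N,S⟩ are Casimir functions of the bracket {·,·}: for every smooth function F: ℝ⁹ → ℝ and every point (M,N,S) ∈ ℝ⁹, {F, H₂}(M,N,S) = {F, H₃}(M,N,S) = {F, H₄}(M,N,S) = 0. -/

import Mathlib

noncomputable section

/-- Cross product on ℝ³. -/
def cross3 (a b : Fin 3 → ℝ) : Fin 3 → ℝ :=
  ![a 1 * b 2 - a 2 * b 1, a 2 * b 0 - a 0 * b 2, a 0 * b 1 - a 1 * b 0]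

/-- Euclidean inner product on ℝ³. -/
def dot3 (a b : Fin 3 → ℝ) : ℝ := a 0 * b 0 + a 1 * b 1 + a 2 * b 2

/-- Gradient with respect to the block `M` of a function `F(M,N,S)`. -/
def gradM (F : (Fin 3 → ℝ) → (Fin 3 → ℝ) → (Fin 3 → ℝ) → ℝ)
    (M N S : Fin 3 → ℝ) : Fin 3 → ℝ :=
  fun i => deriv (fun x : ℝ => F (Function.update M i x) N S) (M i)

/-- Gradient with respect to the block `N` of a function `F(M,N,S)`. -/
def gradN (F : (Fin 3 → ℝ) → (Fin 3 → ℝ) → (Fin 3 → ℝ) → ℝ)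
    (M N S : Fin 3 → ℝ) : Fin 3 → ℝ :=
  fun i => deriv (fun x : ℝ => F M (Function.update N i x) S) (N i)

/-- Gradient with respect to the block `S` of a function `F(M,N,S)`. -/
def gradS (F : (Fin 3 → ℝ) → (Fin 3 → ℝ) → (Fin 3 → ℝ) → ℝ)
    (M N S : Fin 3 → ℝ) : Fin 3 → ℝ :=
  fun i => deriv (fun x : ℝ => F M N (Function.update S i x)) (S i)

/-- The Poisson bracket
`{F,G} = −⟨M, ∇_M F×∇_M G⟩ − ⟨N, ∇_M F×∇_N G − ∇_M G×∇_N F⟩ − ⟨S, ∇_M F×∇_S G − ∇_M G×∇_S F⟩`. -/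
def pbracket (F G : (Fin 3 → ℝ) → (Fin 3 → ℝ) → (Fin 3 → ℝ) → ℝ)
    (M N S : Fin 3 → ℝ) : ℝ :=
  - dot3 M (cross3 (gradM F M N S) (gradM G M N S))
  - dot3 N (cross3 (gradM F M N S) (gradN G M N S) - cross3 (gradM G M N S) (gradN F M N S))
  - dot3 S (cross3 (gradM F M N S) (gradS G M N S) - cross3 (gradM G M N S) (gradS F M N S))

/-!
If `G` does not depend on `M`, then `{F, G}` is the inner product of `∇_M F` with
`N × ∇_N G + S × ∇_S G`, the derivative of `G` under the simultaneous infinitesimal rotations of `N`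
and `S`. The inner products of `N` and `S` are invariant under such rotations, so this
derivative vanishes for them.
-/

open Matrix Function

section CoordGradient

variable {𝕜 n : Type*} [NontriviallyNormedField 𝕜]

/-- The vector of partial derivatives of a function on `𝕜ⁿ`: `gradM`, `gradN` and `gradS` are
this gradient in one block of variables. The `i`-th entry is `0` where the `i`-th partial
derivative does not exist. -/
def coordGradient [DecidableEq n] (f : (n → 𝕜) → 𝕜) (v : n → 𝕜) : n → 𝕜 :=
  fun i => deriv (fun x => f (update v i x)) (v i)

theorem coordGradient_const [DecidableEq n] (c : 𝕜) (v : n → 𝕜) :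
    coordGradient (fun _ => c) v = 0 :=
  funext fun i => deriv_const (v i) c

variable [Fintype n]

theorem hasDerivAt_dotProduct {f g : 𝕜 → n → 𝕜} {f' g' : n → 𝕜} {x : 𝕜}
    (hf : HasDerivAt f f' x) (hg : HasDerivAt g g' x) :
    HasDerivAt (fun t => f t ⬝ᵥ g t) (f' ⬝ᵥ g x + f x ⬝ᵥ g') x := by
  simp only [dotProduct, ← Finset.sum_add_distrib]
  exact HasDerivAt.fun_sum fun i _ => (hasDerivAt_pi.1 hf i).mul (hasDerivAt_pi.1 hg i)

variable [DecidableEq n]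

theorem coordGradient_dotProduct_left (v w : n → 𝕜) :
    coordGradient (fun u => u ⬝ᵥ w) v = w := by
  funext i
  have h := hasDerivAt_dotProduct (hasDerivAt_update v i (v i)) (hasDerivAt_const (v i) w)
  simpa [coordGradient] using h.deriv

theorem coordGradient_dotProduct_right (v w : n → 𝕜) :
    coordGradient (fun u => w ⬝ᵥ u) v = w := by
  simpa only [dotProduct_comm w] using coordGradient_dotProduct_left v w

theorem coordGradient_dotProduct_self (v : n → 𝕜) :
    coordGradient (fun u => u ⬝ᵥ u) v = (2 : 𝕜) • v := by
  funext i
  have h := hasDerivAt_update v i (v i)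
  simpa [coordGradient, two_mul] using (hasDerivAt_dotProduct h h).deriv

end CoordGradient

section Bracket

theorem dot3_eq_dotProduct (a b : Fin 3 → ℝ) : dot3 a b = a ⬝ᵥ b :=
  (vec3_dotProduct a b).symm

theorem cross3_eq_crossProduct (a b : Fin 3 → ℝ) : cross3 a b = a ⨯₃ b :=
  (cross_apply a b).symm

variable (F : (Fin 3 → ℝ) → (Fin 3 → ℝ) → (Fin 3 → ℝ) → ℝ)

theorem pbracket_of_independent_of_M (g : (Fin 3 → ℝ) → (Fin 3 → ℝ) → ℝ) (M N S : Fin 3 → ℝ) :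
    pbracket F (fun _ => g) M N S =
      gradM F M N S ⬝ᵥ
        (N ⨯₃ coordGradient (fun n => g n S) N + S ⨯₃ coordGradient (g N) S) := by
  have gradM_zero : gradM (fun _ => g) M N S = 0 := coordGradient_const (g N S) M
  have gradN_eq : gradN (fun _ => g) M N S = coordGradient (fun n => g n S) N := rfl
  have gradS_eq : gradS (fun _ => g) M N S = coordGradient (g N) S := rfl
  have triple_swap (u a v : Fin 3 → ℝ) : -(u ⬝ᵥ a ⨯₃ v) = a ⬝ᵥ u ⨯₃ v := by
    rw [triple_product_permutation, ← cross_anticomm, dotProduct_neg, neg_neg]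
  simp only [pbracket, dot3_eq_dotProduct, cross3_eq_crossProduct, gradM_zero, gradN_eq, gradS_eq,
    map_zero, LinearMap.zero_apply, sub_zero, dotProduct_zero, neg_zero, zero_sub, dotProduct_add]
  rw [sub_eq_add_neg, triple_swap, triple_swap]

theorem geometric_integrals_are_casimirs_general (M N S : Fin 3 → ℝ) :
    pbracket F (fun _ _ S => dot3 S S) M N S = 0 ∧
    pbracket F (fun _ N _ => dot3 N N) M N S = 0 ∧
    pbracket F (fun _ N S => dot3 N S) M N S = 0 := by
  simp only [dot3_eq_dotProduct, pbracket_of_independent_of_M]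
  refine ⟨?_, ?_, ?_⟩
  · rw [coordGradient_const, coordGradient_dotProduct_self, map_zero, map_smul, cross_self,
      smul_zero, add_zero, dotProduct_zero]
  · rw [coordGradient_const, coordGradient_dotProduct_self, map_zero, map_smul, cross_self,
      smul_zero, add_zero, dotProduct_zero]
  · rw [coordGradient_dotProduct_left, coordGradient_dotProduct_right, cross_anticomm',
      dotProduct_zero]

end Bracket

/-- `H₂ = ⟨S,S⟩`, `H₃ = ⟨N,N⟩` and `H₄ = ⟨N,S⟩` are Casimir functions
of the Poisson bracket: they commute with every smooth function `F`. -/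
theorem geometric_integrals_are_casimirs
    (F : (Fin 3 → ℝ) → (Fin 3 → ℝ) → (Fin 3 → ℝ) → ℝ)
    (hF : ContDiff ℝ (⊤ : ℕ∞) (fun x : (Fin 3 → ℝ) × (Fin 3 → ℝ) × (Fin 3 → ℝ) =>
      F x.1 x.2.1 x.2.2)) :
    ∀ (M N S : Fin 3 → ℝ),
      pbracket F (fun _ _ S => dot3 S S) M N S = 0 ∧
      pbracket F (fun _ N _ => dot3 N N) M N S = 0 ∧
      pbracket F (fun _ N S => dot3 N S) M N S = 0 :=
  geometric_integrals_are_casimirs_general F
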